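/- Let ψ = (a₁,a₂,a₃,b₁,b₂,b₃) be a real vector such that the matrix V = 𝒱(ψ) satisfies V_{ij} > 0 whenever i ∉ {j−1, j} (indices mod 7). Then V has nonnegative rank strictly less than 7; that is, there exist a 7×6 matrix B and a 6×7 matrix C, both with all entries nonnegative, such that V = B·C. -/

import Mathlib

/-!
Write `S i j = [i, j, j + 1]` for the slack matrix of a convex heptagon. At every vertex `r`,
consider the line joining `r` to the intersection of the edge lines `(r + 1, r + 2)` and
`(r + 5, r + 6)`.

Suppose that for `r = 0` this line meets the opposite edge `(3, 4)`. The linear dependencies of the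
vertices `0, 1, 2, 3` and `0, 4, 5, 6` give, after a positive rescaling of the rows of `S`,
`x₀ + x₂ = x₁ + x₃` and `x₀ + x₅ = x₄ + x₆`: the rows label the edges of two quadrilaterals glued
along the edge `x₀`. Six nonnegative vectors on the vertices of this graph, each row being the sum
at its two ends, exist as soon as `x₀ ≤ x₁ + x₄` and `x₀ ≤ x₃ + x₆`, and that is what the position
of the line provides.

Some vertex has this property. Otherwise each of the seven lines misses its opposite edge on one of
two sides. A miss on the side of `r + 3` excludes a miss on the other side at `r + 3`; since `3`
generates `ℤ/7`, all lines miss on the same side, and three consecutive ones contradict the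
inequality `S 0 5 * S 1 6 * S 5 3 < S 3 5 * S 4 6 * S 5 0`.
-/

/-- The rows of the 7-by-3 matrix `W(a₁,a₂,a₃,b₁,b₂,b₃)`, indexed by `ZMod 7`
(index `k` representing the `k`-th row, with `7 ≡ 0`): `Wrow ... k` is the
`k`-th column of the 3-by-7 matrix with rows `(0,0,1,1,a₁,a₂,a₃)`,
`(1,0,0,1,1,1,1)`, `(1,1,0,0,b₁,b₂,b₃)`. -/
noncomputable def Wrow (a₁ a₂ a₃ b₁ b₂ b₃ : ℝ) (k : ZMod 7) : Fin 3 → ℝ :=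
  fun r =>
    (Matrix.of ![![(0 : ℝ), 0, 1, 1, a₁, a₂, a₃],
                 ![1, 0, 0, 1, 1, 1, 1],
                 ![1, 1, 0, 0, b₁, b₂, b₃]]) r ⟨(k - 1).val, ZMod.val_lt _⟩

/-- The 7-by-7 matrix `𝒱(a₁,a₂,a₃,b₁,b₂,b₃)`, indexed by `ZMod 7`: its `(i,j)` entry
is the determinant of the 3-by-3 matrix with rows `W_{i-1}`, `W_{j-2}`, `W_{j-1}`. -/
noncomputable def Vmat (a₁ a₂ a₃ b₁ b₂ b₃ : ℝ) : Matrix (ZMod 7) (ZMod 7) ℝ :=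
  Matrix.of fun i j =>
    Matrix.det (Matrix.of ![Wrow a₁ a₂ a₃ b₁ b₂ b₃ (i - 1),
                            Wrow a₁ a₂ a₃ b₁ b₂ b₃ (j - 2),
                            Wrow a₁ a₂ a₃ b₁ b₂ b₃ (j - 1)])

section NonnegRank

variable {m n K : Type*}

/-- `NonnegRankLE A k`: the matrix `A` has nonnegative rank at most `k`. -/
def NonnegRankLE [Semiring K] [LE K] (A : Matrix m n K) (k : ℕ) : Prop :=
  ∃ (B : Matrix m (Fin k) K) (C : Matrix (Fin k) n K),
    (∀ i j, 0 ≤ B i j) ∧ (∀ i j, 0 ≤ C i j) ∧ A = B * C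

lemma NonnegRankLE.submatrix [Semiring K] [LE K] {m' n' : Type*} {A : Matrix m n K} {k : ℕ}
    (hA : NonnegRankLE A k) (f : m' → m) (g : n' → n) : NonnegRankLE (A.submatrix f g) k := by
  obtain ⟨B, C, hB, hC, rfl⟩ := hA
  exact ⟨B.submatrix f id, C.submatrix id g, fun _ _ => hB _ _, fun _ _ => hC _ _, rfl⟩

variable [Field K] [LinearOrder K] [IsStrictOrderedRing K]

lemma NonnegRankLE.of_row_scaling {A : Matrix m n K} {k : ℕ} {d : m → K} (hd : ∀ i, 0 < d i)
    (hA : NonnegRankLE (Matrix.of fun i j => d i * A i j) k) : NonnegRankLE A k := by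
  obtain ⟨B, C, hB, hC, hBC⟩ := hA
  refine ⟨Matrix.of fun i l => (d i)⁻¹ * B i l, C,
    fun i l => mul_nonneg (inv_nonneg.2 (hd i).le) (hB i l), hC, ?_⟩
  ext i j
  have hij : d i * A i j = ∑ l, B i l * C l j := congrFun₂ hBC i j
  simp only [Matrix.mul_apply, Matrix.of_apply, mul_assoc, ← Finset.mul_sum]
  rw [← hij, inv_mul_cancel_left₀ (hd i).ne']

lemma nonnegRankLE_six_of_two_quadrilaterals_of_split (X : Matrix (ZMod 7) n K) (t : n → K)
    (h₁₂₃ : ∀ j, X 0 j + X 2 j = X 1 j + X 3 j) (h₄₅₆ : ∀ j, X 0 j + X 5 j = X 4 j + X 6 j)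
    (t_nonneg : ∀ j, 0 ≤ t j) (t_le_zero : ∀ j, t j ≤ X 0 j) (t_le_one : ∀ j, t j ≤ X 1 j)
    (t_le_six : ∀ j, t j ≤ X 6 j) (rest_le_three : ∀ j, X 0 j - t j ≤ X 3 j)
    (rest_le_four : ∀ j, X 0 j - t j ≤ X 4 j) :
    NonnegRankLE X 6 := by
  -- The edge-vertex incidence matrix of the two quadrilaterals sharing the edge `0`.
  let B : Matrix (Fin 7) (Fin 6) K :=
    !![1, 1, 0, 0, 0, 0;
       1, 0, 1, 0, 0, 0;
       0, 0, 1, 1, 0, 0;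
       0, 1, 0, 1, 0, 0;
       0, 1, 0, 0, 1, 0;
       0, 0, 0, 0, 1, 1;
       1, 0, 0, 0, 0, 1]
  let C : Matrix (Fin 6) n K :=
    Matrix.of ![t, fun j => X 0 j - t j, fun j => X 1 j - t j, fun j => X 3 j - (X 0 j - t j),
      fun j => X 4 j - (X 0 j - t j), fun j => X 6 j - t j]
  have B_nonneg (i : Fin 7) (l : Fin 6) : 0 ≤ B i l := by
    fin_cases i <;> fin_cases l <;> simp [B]
  have C_nonneg (l : Fin 6) (j : n) : 0 ≤ C l j := by
    fin_cases l
    exacts [t_nonneg j, sub_nonneg.2 (t_le_zero j), sub_nonneg.2 (t_le_one j),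
      sub_nonneg.2 (rest_le_three j), sub_nonneg.2 (rest_le_four j), sub_nonneg.2 (t_le_six j)]
  have factorization (i : Fin 7) (j : n) : X i j = ∑ l, B i l * C l j := by
    have row : X i j = ![X 0 j, X 1 j, X 2 j, X 3 j, X 4 j, X 5 j, X 6 j] i := by
      fin_cases i <;> rfl
    have := h₁₂₃ j
    have := h₄₅₆ j
    rw [row]
    fin_cases i <;> simp [B, C, Fin.sum_univ_succ] <;> linarith
  exact ⟨B, C, B_nonneg, C_nonneg, Matrix.ext factorization⟩

lemma nonnegRankLE_six_of_two_quadrilaterals (X : Matrix (ZMod 7) n K) (hX : ∀ i j, 0 ≤ X i j)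
    (h₁₂₃ : ∀ j, X 0 j + X 2 j = X 1 j + X 3 j) (h₄₅₆ : ∀ j, X 0 j + X 5 j = X 4 j + X 6 j)
    (h₁₄ : ∀ j, X 0 j ≤ X 1 j + X 4 j) (h₃₆ : ∀ j, X 0 j ≤ X 3 j + X 6 j) :
    NonnegRankLE X 6 := by
  -- The least value that the bounds `X 0 - t ≤ X 3` and `X 0 - t ≤ X 4` allow.
  let t : n → K := fun j => max 0 (max (X 0 j - X 3 j) (X 0 j - X 4 j))
  have t_nonneg (j) : 0 ≤ t j := le_max_left _ _
  have t_le_zero (j) : t j ≤ X 0 j :=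
    max_le (hX 0 j) (max_le (sub_le_self _ (hX 3 j)) (sub_le_self _ (hX 4 j)))
  have t_le_one (j) : t j ≤ X 1 j :=
    max_le (hX 1 j) (max_le (by linarith [h₁₂₃ j, hX 2 j]) (by linarith [h₁₄ j]))
  have t_le_six (j) : t j ≤ X 6 j :=
    max_le (hX 6 j) (max_le (by linarith [h₃₆ j]) (by linarith [h₄₅₆ j, hX 5 j]))
  have rest_le_three (j) : X 0 j - t j ≤ X 3 j :=
    sub_le_comm.1 ((le_max_left _ _).trans (le_max_right _ _))
  have rest_le_four (j) : X 0 j - t j ≤ X 4 j :=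
    sub_le_comm.1 ((le_max_right _ _).trans (le_max_right _ _))
  exact nonnegRankLE_six_of_two_quadrilaterals_of_split X t h₁₂₃ h₄₅₆ t_nonneg t_le_zero t_le_one
    t_le_six rest_le_three rest_le_four

end NonnegRank

section Bracket

variable {ι R : Type*} [CommRing R] (v : ι → Fin 3 → R)

/-- The bracket `[i, j, k]` of a configuration of vectors in three-space, that is, its Plücker
coordinate at `i, j, k`. -/
def bracket (i j k : ι) : R :=
  Matrix.det (Matrix.of ![v i, v j, v k])

lemma bracket_rotate (i j k : ι) : bracket v i j k = bracket v j k i := by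
  simp only [bracket, Matrix.det_fin_three, Matrix.of_apply, Matrix.cons_val]
  ring

lemma bracket_three_term (a b c x y : ι) :
    bracket v x a b * bracket v y b c - bracket v x b c * bracket v y a b =
      bracket v b x y * bracket v a b c := by
  simp only [bracket, Matrix.det_fin_three, Matrix.of_apply, Matrix.cons_val]
  ring

lemma bracket_linear_dependency (a b c d x y : ι) :
    bracket v b c d * bracket v a x y + bracket v a b d * bracket v c x y =
      bracket v a c d * bracket v b x y + bracket v a b c * bracket v d x y := by
  simp only [bracket, Matrix.det_fin_three, Matrix.of_apply, Matrix.cons_val]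
  ring

end Bracket

section Polygon

variable {n : ℕ} {R : Type*}

/-- The polygon `v` with its vertices renumbered so that the old vertex `r` becomes vertex `0`. -/
def rotatePolygon (v : ZMod n → Fin 3 → R) (r : ZMod n) : ZMod n → Fin 3 → R :=
  fun i => v (i + r)

/-- The polygon `v` traversed in the opposite direction. The sign keeps its orientation positive,
since the determinant of three vectors is odd. -/
def reflectPolygon [Neg R] (v : ZMod n → Fin 3 → R) : ZMod n → Fin 3 → R :=
  fun i => -v (-i)

lemma rotatePolygon_rotatePolygon (v : ZMod n → Fin 3 → R) (r s : ZMod n) :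
    rotatePolygon (rotatePolygon v r) s = rotatePolygon v (r + s) := by
  funext i
  simp only [rotatePolygon, add_assoc, add_comm s]

lemma reflectPolygon_rotatePolygon [Neg R] (v : ZMod n → Fin 3 → R) (r : ZMod n) :
    reflectPolygon (rotatePolygon v r) = rotatePolygon (reflectPolygon v) (-r) := by
  funext i
  simp only [reflectPolygon, rotatePolygon, neg_add, neg_neg]

variable [CommRing R] (v : ZMod n → Fin 3 → R)

/-- The slack matrix of a polygon whose vertices have homogeneous coordinates `v`: its `(i, j)`
entry measures how far vertex `i` is from the line through the vertices `j` and `j + 1`. -/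
def slackMatrix : Matrix (ZMod n) (ZMod n) R :=
  Matrix.of fun i j => bracket v i j (j + 1)

lemma slackMatrix_rotatePolygon (r i j : ZMod n) :
    slackMatrix (rotatePolygon v r) i j = slackMatrix v (i + r) (j + r) := by
  simp only [slackMatrix, Matrix.of_apply, bracket, rotatePolygon, add_right_comm]

lemma slackMatrix_reflectPolygon (i j : ZMod n) :
    slackMatrix (reflectPolygon v) i j = slackMatrix v (-i) (-j - 1) := by
  simp only [slackMatrix, Matrix.of_apply, bracket, reflectPolygon, sub_add_cancel, neg_add',
    Matrix.det_fin_three, Matrix.cons_val, Pi.neg_apply]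
  ring

lemma slackMatrix_self (i : ZMod n) : slackMatrix v i i = 0 :=
  Matrix.det_zero_of_row_eq (M := Matrix.of ![v i, v i, v (i + 1)]) (i := 0) (j := 1)
    (by decide) rfl

lemma slackMatrix_add_one_self (i : ZMod n) : slackMatrix v (i + 1) i = 0 :=
  Matrix.det_zero_of_row_eq (M := Matrix.of ![v (i + 1), v i, v (i + 1)]) (i := 0) (j := 2)
    (by decide) rfl

lemma slackMatrix_add_two_self (i : ZMod n) :
    slackMatrix v (i + 1 + 1) i = slackMatrix v i (i + 1) :=
  bracket_rotate v _ _ _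

lemma slackMatrix_adjacent_minor (i j : ZMod n) :
    slackMatrix v i j * slackMatrix v (i + 1) (j + 1) -
        slackMatrix v i (j + 1) * slackMatrix v (i + 1) j =
      slackMatrix v (j + 1) i * slackMatrix v j (j + 1) :=
  bracket_three_term v j (j + 1) (j + 1 + 1) i (i + 1)

lemma slackMatrix_linear_dependency (i j : ZMod n) :
    slackMatrix v (i + 1) (i + 2) * slackMatrix v i j +
        slackMatrix v (i + 3) i * slackMatrix v (i + 2) j =
      slackMatrix v i (i + 2) * slackMatrix v (i + 1) j +
        slackMatrix v i (i + 1) * slackMatrix v (i + 3) j := by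
  have add_two : i + 1 + 1 = i + 2 := by ring
  have add_three : i + 2 + 1 = i + 3 := by ring
  simp only [slackMatrix, Matrix.of_apply, add_two, add_three, bracket_rotate v (i + 3) i (i + 1)]
  exact bracket_linear_dependency v i (i + 1) (i + 2) (i + 3) j (j + 1)

/-- A polygon in homogeneous coordinates is convex and positively oriented: every vertex lies
strictly on the positive side of every edge line not passing through it. -/
def IsConvexPolygon [LT R] (v : ZMod n → Fin 3 → R) : Prop :=
  ∀ i j, i ≠ j → i ≠ j + 1 → 0 < slackMatrix v i j

variable {v}

lemma IsConvexPolygon.rotate [LT R] (hv : IsConvexPolygon v) (r : ZMod n) :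
    IsConvexPolygon (rotatePolygon v r) := by
  intro i j hij hij'
  rw [slackMatrix_rotatePolygon]
  exact hv _ _ (by simpa using hij) (by rwa [add_right_comm, add_left_injective r |>.ne_iff])

lemma IsConvexPolygon.reflect [LT R] (hv : IsConvexPolygon v) :
    IsConvexPolygon (reflectPolygon v) := by
  intro i j hij hij'
  rw [slackMatrix_reflectPolygon]
  exact hv _ _ (by simpa [neg_eq_iff_eq_neg, add_comm] using hij') (by simpa using hij)

lemma IsConvexPolygon.slackMatrix_nonneg [Preorder R] (hv : IsConvexPolygon v) (i j : ZMod n) :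
    0 ≤ slackMatrix v i j := by
  by_cases hij : i = j
  · exact hij ▸ (slackMatrix_self v i).ge
  by_cases hij' : i = j + 1
  · exact hij' ▸ (slackMatrix_add_one_self v j).ge
  exact (hv i j hij hij').le

lemma IsConvexPolygon.slackMatrix_adjacent_minor_pos [PartialOrder R] [IsStrictOrderedRing R]
    (hv : IsConvexPolygon v) (hn : (2 : ZMod n) ≠ 0) {i j : ZMod n} (hi : j + 1 ≠ i)
    (hi' : j ≠ i) :
    slackMatrix v i (j + 1) * slackMatrix v (i + 1) j <
      slackMatrix v i j * slackMatrix v (i + 1) (j + 1) := by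
  have one_ne_zero : (1 : ZMod n) ≠ 0 := fun h => hn (by rw [← one_add_one_eq_two, h, add_zero])
  have ear_pos : 0 < slackMatrix v j (j + 1) :=
    hv _ _ (by simpa using one_ne_zero) (by simpa [add_assoc, one_add_one_eq_two] using hn)
  rw [← sub_pos, slackMatrix_adjacent_minor]
  exact mul_pos (hv _ _ hi (by simpa using hi')) ear_pos

end Polygon

section ConvexPolygon

variable {n : ℕ} {K : Type*} [Field K] [LinearOrder K] [IsStrictOrderedRing K]
  {v : ZMod n → Fin 3 → K}

lemma IsConvexPolygon.row_ratio_lt_row_ratio_add_one (hv : IsConvexPolygon v)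
    (hn : (2 : ZMod n) ≠ 0) {i j : ZMod n} (h₀ : i ≠ j) (h₁ : i ≠ j + 1) (h₂ : i ≠ j + 1 + 1) :
    slackMatrix v (i + 1) j / slackMatrix v i j <
      slackMatrix v (i + 1) (j + 1) / slackMatrix v i (j + 1) := by
  rw [div_lt_div_iff₀ (hv i j h₀ h₁) (hv i (j + 1) h₁ h₂)]
  linarith [hv.slackMatrix_adjacent_minor_pos hn h₁.symm h₀.symm]

lemma IsConvexPolygon.column_ratio_lt_column_ratio_add_one (hv : IsConvexPolygon v)
    (hn : (2 : ZMod n) ≠ 0) {i j : ZMod n} (h₀ : j ≠ i) (h₁ : j + 1 ≠ i) (h₂ : j ≠ i + 1) :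
    slackMatrix v i (j + 1) / slackMatrix v i j <
      slackMatrix v (i + 1) (j + 1) / slackMatrix v (i + 1) j := by
  rw [div_lt_div_iff₀ (hv i j h₀.symm h₁.symm)
    (hv (i + 1) j h₂.symm (by simpa using h₀.symm))]
  linarith [hv.slackMatrix_adjacent_minor_pos hn h₁ h₀]

end ConvexPolygon

section SkewHeptagon

variable {R : Type*} [CommRing R] [LT R] {v : ZMod 7 → Fin 3 → R}

local notation "S" => slackMatrix v

variable (v) in
/-- The line joining vertex `0` of a heptagon to the intersection of the edge lines `12` and `56`
leaves vertex `3` strictly on the side of `5` and `6`. The mirror image,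
`IsSkewHeptagon (reflectPolygon v)`, says that vertex `4` is strictly on the side of `1` and `2`;
when both fail, the line meets the edge `34`. -/
def IsSkewHeptagon : Prop :=
  S 0 1 * S 3 5 < S 0 5 * S 3 1

lemma isSkewHeptagon_rotatePolygon_iff (r : ZMod 7) :
    IsSkewHeptagon (rotatePolygon v r) ↔
      S r (1 + r) * S (3 + r) (5 + r) < S r (5 + r) * S (3 + r) (1 + r) := by
  simp only [IsSkewHeptagon, slackMatrix_rotatePolygon, zero_add]

lemma isSkewHeptagon_reflectPolygon_iff :
    IsSkewHeptagon (reflectPolygon v) ↔ S 0 5 * S 4 1 < S 0 1 * S 4 5 := by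
  simp only [IsSkewHeptagon, slackMatrix_reflectPolygon]
  rfl

end SkewHeptagon

section Heptagon

variable {K : Type*} [Field K] [LinearOrder K] [IsStrictOrderedRing K] {v : ZMod 7 → Fin 3 → K}

local notation "S" => slackMatrix v

lemma IsSkewHeptagon.not_isSkewHeptagon_reflectPolygon_rotatePolygon_three
    (hskew : IsSkewHeptagon v) (hv : IsConvexPolygon v) :
    ¬ IsSkewHeptagon (reflectPolygon (rotatePolygon v 3)) := by
  rw [isSkewHeptagon_reflectPolygon_iff]
  simp only [slackMatrix_rotatePolygon]
  intro hskew'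
  have h₀₁ : 0 < S 0 1 := hv _ _ (by decide) (by decide)
  have h₀₄ : 0 < S 0 4 := hv _ _ (by decide) (by decide)
  have h₀₅ : 0 < S 0 5 := hv _ _ (by decide) (by decide)
  have h₃₄ : 0 < S 3 4 := hv _ _ (by decide) (by decide)
  have h₅₁ : S 3 5 / S 0 5 < S 3 1 / S 0 1 := by
    rw [div_lt_div_iff₀ h₀₅ h₀₁, mul_comm, mul_comm (S 3 1)]
    exact hskew
  have h₁₄ : S 3 1 / S 0 1 < S 3 4 / S 0 4 := by
    rw [div_lt_div_iff₀ h₀₁ h₀₄]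
    exact hskew'
  have h₀₃ : S 0 5 / S 0 4 < S 3 5 / S 3 4 :=
    calc S 0 5 / S 0 4
        < S 1 5 / S 1 4 := hv.column_ratio_lt_column_ratio_add_one
          (i := 0) (j := 4) (by decide) (by decide) (by decide) (by decide)
      _ < S 2 5 / S 2 4 := hv.column_ratio_lt_column_ratio_add_one
          (i := 1) (j := 4) (by decide) (by decide) (by decide) (by decide)
      _ < S 3 5 / S 3 4 := hv.column_ratio_lt_column_ratio_add_one
          (i := 2) (j := 4) (by decide) (by decide) (by decide) (by decide)
  have h₅₄ := (div_lt_div_iff₀ h₀₅ h₀₄).1 (h₅₁.trans h₁₄)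
  have h₄₅ := (div_lt_div_iff₀ h₀₄ h₃₄).1 h₀₃
  linarith

lemma IsConvexPolygon.slackMatrix_triple_mul_lt (hv : IsConvexPolygon v) :
    S 0 5 * S 1 6 * S 5 3 < S 3 5 * S 4 6 * S 5 0 := by
  have h₀₅ : 0 < S 0 5 := hv _ _ (by decide) (by decide)
  have h₃₆ : 0 < S 3 6 := hv _ _ (by decide) (by decide)
  have h₄₅ : 0 < S 4 5 := hv _ _ (by decide) (by decide)
  have h₅₀ : 0 < S 5 0 := hv _ _ (by decide) (by decide)
  have h₅₃ : 0 < S 5 3 := hv _ _ (by decide) (by decide)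
  have ear₅ : S 0 5 = S 5 6 := slackMatrix_add_two_self v 5
  have ear₆ : S 1 6 = S 6 0 := slackMatrix_add_two_self v 6
  have minor₅₆ : S 6 0 * S 5 3 < S 6 3 * S 5 0 := by
    rw [← div_lt_div_iff₀ h₅₀ h₅₃]
    calc S 6 0 / S 5 0
        < S 6 1 / S 5 1 := hv.row_ratio_lt_row_ratio_add_one
          (i := 5) (j := 0) (by decide) (by decide) (by decide) (by decide)
      _ < S 6 2 / S 5 2 := hv.row_ratio_lt_row_ratio_add_one
          (i := 5) (j := 1) (by decide) (by decide) (by decide) (by decide)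
      _ < S 6 3 / S 5 3 := hv.row_ratio_lt_row_ratio_add_one
          (i := 5) (j := 2) (by decide) (by decide) (by decide) (by decide)
  have minor₃₄ : S 6 3 * S 5 6 < S 3 5 * S 4 6 := by
    have : S 3 5 * S 4 6 - S 3 6 * S 4 5 = S 6 3 * S 5 6 := slackMatrix_adjacent_minor v 3 5
    linarith [mul_pos h₃₆ h₄₅]
  calc S 0 5 * S 1 6 * S 5 3
      = S 0 5 * (S 6 0 * S 5 3) := by rw [ear₆, mul_assoc]
    _ < S 0 5 * (S 6 3 * S 5 0) := mul_lt_mul_of_pos_left minor₅₆ h₀₅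
    _ = S 6 3 * S 5 6 * S 5 0 := by rw [ear₅]; ring
    _ < S 3 5 * S 4 6 * S 5 0 := mul_lt_mul_of_pos_right minor₃₄ h₅₀

lemma IsConvexPolygon.not_three_consecutive_isSkewHeptagon (hv : IsConvexPolygon v)
    (skew₀ : IsSkewHeptagon v) (skew₁ : IsSkewHeptagon (rotatePolygon v 1)) :
    ¬ IsSkewHeptagon (rotatePolygon v 2) := by
  intro skew₂
  rw [isSkewHeptagon_rotatePolygon_iff] at skew₁ skew₂
  have h₀₁ : 0 < S 0 1 := hv _ _ (by decide) (by decide)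
  have h₁₂ : 0 < S 1 2 := hv _ _ (by decide) (by decide)
  have h₂₃ : 0 < S 2 3 := hv _ _ (by decide) (by decide)
  have ear₀ : S 2 0 = S 0 1 := slackMatrix_add_two_self v 0
  have ear₁ : S 3 1 = S 1 2 := slackMatrix_add_two_self v 1
  have ear₂ : S 4 2 = S 2 3 := slackMatrix_add_two_self v 2
  have bound₀ : S 0 1 * S 3 5 < S 0 5 * S 1 2 := ear₁ ▸ skew₀
  have bound₁ : S 1 2 * S 4 6 < S 1 6 * S 2 3 := ear₂ ▸ skew₁
  have bound₂ : S 2 3 * S 5 0 < S 0 1 * S 5 3 := ear₀ ▸ skew₂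
  have h₃₅ : 0 ≤ S 3 5 := hv.slackMatrix_nonneg _ _
  have h₄₆ : 0 ≤ S 4 6 := hv.slackMatrix_nonneg _ _
  have h₅₀ : 0 ≤ S 5 0 := hv.slackMatrix_nonneg _ _
  have product_lt :
      (S 0 1 * S 1 2 * S 2 3) * (S 3 5 * S 4 6 * S 5 0) <
        (S 0 1 * S 1 2 * S 2 3) * (S 0 5 * S 1 6 * S 5 3) :=
    calc _ = S 0 1 * S 3 5 * (S 1 2 * S 4 6) * (S 2 3 * S 5 0) := by ring
      _ < S 0 5 * S 1 2 * (S 1 6 * S 2 3) * (S 0 1 * S 5 3) := by gcongr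
      _ = _ := by ring
  exact lt_asymm hv.slackMatrix_triple_mul_lt (lt_of_mul_lt_mul_left product_lt (by positivity))

lemma IsConvexPolygon.exists_not_isSkewHeptagon_rotatePolygon (hv : IsConvexPolygon v) :
    ∃ r, ¬ IsSkewHeptagon (rotatePolygon v r) ∧
      ¬ IsSkewHeptagon (reflectPolygon (rotatePolygon v r)) := by
  by_contra! hskew
  have skew_add_three (r) (hr : IsSkewHeptagon (rotatePolygon v r)) :
      IsSkewHeptagon (rotatePolygon v (r + 3)) := by
    by_contra hr'
    have := hr.not_isSkewHeptagon_reflectPolygon_rotatePolygon_three (hv.rotate r)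
    rw [rotatePolygon_rotatePolygon] at this
    exact this (hskew _ hr')
  have skew_add_one (r) (hr : IsSkewHeptagon (rotatePolygon v r)) :
      IsSkewHeptagon (rotatePolygon v (r + 1)) := by
    have five_steps : r + 3 + 3 + 3 + 3 + 3 = r + 1 := by clear hr; decide +revert
    rw [← five_steps]
    iterate 5 apply skew_add_three
    exact hr
  by_cases hex : ∃ r, IsSkewHeptagon (rotatePolygon v r)
  · obtain ⟨r, hr⟩ := hex
    have hr₁ := skew_add_one r hr
    have hr₂ := skew_add_one _ hr₁
    refine (hv.rotate r).not_three_consecutive_isSkewHeptagon hr ?_ ?_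
    · rwa [rotatePolygon_rotatePolygon]
    · rwa [rotatePolygon_rotatePolygon, ← one_add_one_eq_two, ← add_assoc]
  · have hall (r) : IsSkewHeptagon (rotatePolygon (reflectPolygon v) r) := by
      rw [← neg_neg r, ← reflectPolygon_rotatePolygon]
      exact hskew _ fun hr => hex ⟨_, hr⟩
    refine (hv.reflect.rotate 0).not_three_consecutive_isSkewHeptagon (hall 0) ?_ ?_ <;>
    · rw [rotatePolygon_rotatePolygon]
      exact hall _

lemma IsConvexPolygon.row_zero_le_row_one_add_row_four (hv : IsConvexPolygon v)
    (h₀₄ : S 0 1 * S 4 5 ≤ S 0 5 * S 4 1) (j : ZMod 7) :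
    S 1 2 * S 4 5 * S 0 j ≤ S 0 2 * S 4 5 * S 1 j + S 0 5 * S 1 2 * S 4 j := by
  have h₁₂ : 0 ≤ S 1 2 := hv.slackMatrix_nonneg _ _
  have h₄₅ : 0 ≤ S 4 5 := hv.slackMatrix_nonneg _ _
  have h₁ : 0 ≤ S 0 2 * S 1 j :=
    mul_nonneg (hv.slackMatrix_nonneg _ _) (hv.slackMatrix_nonneg _ _)
  have h₄ : 0 ≤ S 0 5 * S 4 j :=
    mul_nonneg (hv.slackMatrix_nonneg _ _) (hv.slackMatrix_nonneg _ _)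
  suffices S 1 2 * S 0 j ≤ S 0 2 * S 1 j ∨ S 4 5 * S 0 j ≤ S 0 5 * S 4 j by
    rcases this with hle | hle
    · linarith [mul_le_mul_of_nonneg_left hle h₄₅, mul_nonneg h₁₂ h₄]
    · linarith [mul_le_mul_of_nonneg_left hle h₁₂, mul_nonneg h₄₅ h₁]
  have columns : ∀ j : ZMod 7, j = 0 ∨ j = 1 ∨ j = 2 ∨ j = 3 ∨ j = 4 ∨ j = 5 ∨ j = 6 := by decide
  obtain rfl | rfl | rfl | rfl | rfl | rfl | rfl := columns j
  · left
    rwa [slackMatrix_self, mul_zero]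
  · right
    rwa [mul_comm]
  · left
    rw [mul_comm]
  · left
    have dependency : S 1 2 * S 0 3 + S 3 0 * S 2 3 = S 0 2 * S 1 3 + S 0 1 * S 3 3 :=
      slackMatrix_linear_dependency v 0 3
    rw [slackMatrix_self, mul_zero, add_zero] at dependency
    exact dependency ▸ le_add_of_nonneg_right
      (mul_nonneg (hv.slackMatrix_nonneg _ _) (hv.slackMatrix_nonneg _ _))
  · left
    rw [mul_comm (S 0 2), ← div_le_div_iff₀ (hv 0 2 (by decide) (by decide))
      (hv 0 4 (by decide) (by decide))]
    exact ((hv.row_ratio_lt_row_ratio_add_one (i := 0) (j := 2)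
      (by decide) (by decide) (by decide) (by decide)).trans
      (hv.row_ratio_lt_row_ratio_add_one (i := 0) (j := 3)
        (by decide) (by decide) (by decide) (by decide))).le
  · right
    rw [mul_comm]
  · left
    rwa [show S 0 6 = 0 from slackMatrix_add_one_self v 6, mul_zero]

lemma IsConvexPolygon.row_zero_le_row_three_add_row_six (hv : IsConvexPolygon v)
    (h₀₃ : S 0 5 * S 3 1 ≤ S 0 1 * S 3 5) (j : ZMod 7) :
    S 1 2 * S 4 5 * S 0 j ≤ S 0 1 * S 4 5 * S 3 j + S 0 4 * S 1 2 * S 6 j := by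
  have ear₁ : S 3 1 = S 1 2 := slackMatrix_add_two_self v 1
  have ear₄ : S 6 4 = S 4 5 := slackMatrix_add_two_self v 4
  have mirror : S 6 4 * S 3 1 * S 0 j ≤ S 0 4 * S 3 1 * S 6 j + S 0 1 * S 6 4 * S 3 j := by
    have := hv.reflect.row_zero_le_row_one_add_row_four
      (by simp only [slackMatrix_reflectPolygon]; exact h₀₃) (-j - 1)
    simp only [slackMatrix_reflectPolygon, neg_sub', neg_neg, sub_neg_eq_add,
      add_sub_cancel_right] at this
    exact this
  rw [ear₁, ear₄] at mirror
  linarith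

lemma IsConvexPolygon.nonnegRankLE_slackMatrix_of_not_isSkewHeptagon (hv : IsConvexPolygon v)
    (hskew : ¬ IsSkewHeptagon v) (hskew' : ¬ IsSkewHeptagon (reflectPolygon v)) :
    NonnegRankLE (slackMatrix v) 6 := by
  rw [isSkewHeptagon_reflectPolygon_iff, not_lt] at hskew'
  have ear₅ : S 5 6 = S 0 5 := (slackMatrix_add_two_self v 5).symm
  have dependency₀₁₂₃ (j) : S 1 2 * S 0 j + S 3 0 * S 2 j = S 0 2 * S 1 j + S 0 1 * S 3 j :=
    slackMatrix_linear_dependency v 0 j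
  have dependency₄₅₆₀ (j) : S 5 6 * S 4 j + S 0 4 * S 6 j = S 4 6 * S 5 j + S 4 5 * S 0 j :=
    slackMatrix_linear_dependency v 4 j
  let d : Fin 7 → K :=
    ![S 1 2 * S 4 5, S 0 2 * S 4 5, S 3 0 * S 4 5, S 0 1 * S 4 5,
      S 0 5 * S 1 2, S 4 6 * S 1 2, S 0 4 * S 1 2]
  have hd : ∀ i, 0 < d i := by
    intro i
    fin_cases i <;> exact mul_pos (hv _ _ (by decide) (by decide)) (hv _ _ (by decide) (by decide))
  refine NonnegRankLE.of_row_scaling (d := d) hd (nonnegRankLE_six_of_two_quadrilaterals _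
    (fun i j => mul_nonneg (hd i).le (hv.slackMatrix_nonneg i j)) (fun j => ?_) (fun j => ?_)
    (hv.row_zero_le_row_one_add_row_four hskew')
    (hv.row_zero_le_row_three_add_row_six (not_lt.1 hskew)))
  · change S 1 2 * S 4 5 * S 0 j + S 3 0 * S 4 5 * S 2 j =
        S 0 2 * S 4 5 * S 1 j + S 0 1 * S 4 5 * S 3 j
    linear_combination S 4 5 * dependency₀₁₂₃ j
  · change S 1 2 * S 4 5 * S 0 j + S 4 6 * S 1 2 * S 5 j =
        S 0 5 * S 1 2 * S 4 j + S 0 4 * S 1 2 * S 6 j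
    rw [← ear₅]
    linear_combination -S 1 2 * dependency₄₅₆₀ j

theorem Vmat_nonneg_rank_lt_seven_general (hv : IsConvexPolygon v) :
    NonnegRankLE (slackMatrix v) 6 := by
  obtain ⟨r, hskew, hskew'⟩ := hv.exists_not_isSkewHeptagon_rotatePolygon
  have hrank := ((hv.rotate r).nonnegRankLE_slackMatrix_of_not_isSkewHeptagon hskew
    hskew').submatrix (· - r) (· - r)
  convert hrank using 1
  ext i j
  simp only [Matrix.submatrix_apply, slackMatrix_rotatePolygon, sub_add_cancel]

end Heptagon

lemma Vmat_eq_submatrix_slackMatrix_Wrow (a₁ a₂ a₃ b₁ b₂ b₃ : ℝ) :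
    Vmat a₁ a₂ a₃ b₁ b₂ b₃ =
      (slackMatrix (Wrow a₁ a₂ a₃ b₁ b₂ b₃)).submatrix (· - 1) (· - 2) := by
  ext i j
  have succ_column : j - 2 + 1 = j - 1 := by ring
  rw [Matrix.submatrix_apply, slackMatrix, Matrix.of_apply, succ_column]
  rfl

lemma isConvexPolygon_Wrow {a₁ a₂ a₃ b₁ b₂ b₃ : ℝ}
    (hpos : ∀ i j : ZMod 7, i ≠ j - 1 → i ≠ j → 0 < Vmat a₁ a₂ a₃ b₁ b₂ b₃ i j) :
    IsConvexPolygon (Wrow a₁ a₂ a₃ b₁ b₂ b₃) := by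
  intro i j hij hij'
  have entry_pos := hpos (i + 1) (j + 2) (fun h => hij (by linear_combination h))
    (fun h => hij' (by linear_combination h))
  simpa only [Vmat_eq_submatrix_slackMatrix_Wrow, Matrix.submatrix_apply,
    add_sub_cancel_right] using entry_pos

/-- If `V = 𝒱(a₁,a₂,a₃,b₁,b₂,b₃)` has positive entries off the pattern
`i ∈ {j-1, j}`, then `V` has nonnegative rank strictly less than 7. -/
theorem Vmat_nonneg_rank_lt_seven (a₁ a₂ a₃ b₁ b₂ b₃ : ℝ)
    (hpos : ∀ i j : ZMod 7, i ≠ j - 1 → i ≠ j → 0 < Vmat a₁ a₂ a₃ b₁ b₂ b₃ i j) :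
    ∃ (B : Matrix (ZMod 7) (Fin 6) ℝ) (C : Matrix (Fin 6) (ZMod 7) ℝ),
      (∀ i j, 0 ≤ B i j) ∧ (∀ i j, 0 ≤ C i j) ∧
      Vmat a₁ a₂ a₃ b₁ b₂ b₃ = B * C := by
  rw [Vmat_eq_submatrix_slackMatrix_Wrow]
  exact (Vmat_nonneg_rank_lt_seven_general (isConvexPolygon_Wrow hpos)).submatrix _ _
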